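/- arXiv:math/0609696 — 3 statements merged into one kernel-verified Lean document; each statement's English description precedes it below -/
import Mathlib

section
/- (Theorem 2.1(a)) Let G ⊆ [0,∞) be a Borel set and β ∈ (0, d). If C_{g_{d−β,+}}(G) > 0, then C_{g_{d−β,−}}(G) > 0. -/
open MeasureTheory Complex
open scoped RealInnerProductSpace ENNReal

noncomputable section

/-- `χ_ξ(x) = exp(−|x| Ψ(sign(x) ξ))`. -/
def chi {d : ℕ} (Ψ : EuclideanSpace ℝ (Fin d) → ℂ) (ξ : EuclideanSpace ℝ (Fin d)) (x : ℝ) : ℂ :=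
  Complex.exp (((-|x| : ℝ) : ℂ) * Ψ (Real.sign x • ξ))

/-- `g_{γ,+}(x) = ∫_{ℝ^d} (Re χ_ξ(x))_+ ‖ξ‖^{−γ} dξ`, with values in `[0,∞]`. -/
def gplus {d : ℕ} (Ψ : EuclideanSpace ℝ (Fin d) → ℂ) (γ : ℝ) (x : ℝ) : ℝ≥0∞ :=
  ∫⁻ ξ : EuclideanSpace ℝ (Fin d),
    ENNReal.ofReal (max ((chi Ψ ξ x).re) 0) * (ENNReal.ofReal ‖ξ‖) ^ (-γ) ∂volume

/-- `g_{γ,−}(x) = ∫_{ℝ^d} (Re χ_ξ(x))_− ‖ξ‖^{−γ} dξ`, with values in `[0,∞]`. -/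
def gminus {d : ℕ} (Ψ : EuclideanSpace ℝ (Fin d) → ℂ) (γ : ℝ) (x : ℝ) : ℝ≥0∞ :=
  ∫⁻ ξ : EuclideanSpace ℝ (Fin d),
    ENNReal.ofReal (max (-(chi Ψ ξ x).re) 0) * (ENNReal.ofReal ‖ξ‖) ^ (-γ) ∂volume

/-- The `f`-energy `E_f(μ) = ∫∫_{G×G} f(t−s) μ(dt)μ(ds)` of a measure on `ℝ`,
for a `[0,∞]`-valued kernel `f`. -/
def energyR (f : ℝ → ℝ≥0∞) (G : Set ℝ) (μ : Measure ℝ) : ℝ≥0∞ :=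
  ∫⁻ t in G, ∫⁻ s in G, f (t - s) ∂μ ∂μ

/-- The `f`-capacity `C_f(G) = [inf_{μ ∈ P(G)} E_f(μ)]⁻¹` (with `1/∞ = 0`), the infimum
being over Borel probability measures supported in `G`. -/
def capacityR (f : ℝ → ℝ≥0∞) (G : Set ℝ) : ℝ≥0∞ :=
  (⨅ (μ : Measure ℝ) (_ : IsProbabilityMeasure μ ∧ μ Gᶜ = 0), energyR f G μ)⁻¹


/-!
The kernel `(t, s) ↦ Re χ_ξ(t − s)` on `[0,∞)²` is `E[cos⟨ξ, X_t − X_s⟩]`, a mixture of kernels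
`cos (u t − u s) = cos (u t) cos (u s) + sin (u t) sin (u s)`. Integrated against `ν ⊗ ν`, each of
these gives `(∫ cos u dν)² + (∫ sin u dν)² ≥ 0`, so for every single frequency `ξ` the negative part
of `Re χ_ξ` has at most the energy of the positive part. As the energy of a mixture of kernels is
the mixture of their energies, integrating over `ξ` compares `g_{γ,−}` with `g_{γ,+}`.
-/

section Energy

variable {f g : ℝ → ℝ≥0∞} {G : Set ℝ} {μ : Measure ℝ}

theorem capacityR_le_capacityR_of_energyR_le
    (h : ∀ μ : Measure ℝ, IsProbabilityMeasure μ → μ Gᶜ = 0 → energyR f G μ ≤ energyR g G μ) :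
    capacityR g G ≤ capacityR f G :=
  ENNReal.inv_le_inv.2 <| iInf_mono fun μ => iInf_mono fun hμ => h μ hμ.1 hμ.2

variable [SFinite μ]

theorem energyR_eq_lintegral_prod (hf : Measurable f) :
    energyR f G μ = ∫⁻ z, f (z.1 - z.2) ∂(μ.restrict G).prod (μ.restrict G) :=
  (lintegral_prod (fun z : ℝ × ℝ => f (z.1 - z.2)) (by fun_prop)).symm

theorem energyR_mul_const (hf : Measurable f) (c : ℝ≥0∞) :
    energyR (fun x => f x * c) G μ = energyR f G μ * c := by
  rw [energyR_eq_lintegral_prod (hf.mul_const c), energyR_eq_lintegral_prod hf,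
    lintegral_mul_const _ (by fun_prop)]

theorem energyR_lintegral {E : Type*} [MeasurableSpace E] {ρ : Measure E} [SFinite ρ]
    {κ : E → ℝ → ℝ≥0∞} (hκ : Measurable (Function.uncurry κ)) :
    energyR (fun x => ∫⁻ ξ, κ ξ x ∂ρ) G μ = ∫⁻ ξ, energyR (κ ξ) G μ ∂ρ := by
  have hκ_diff : Measurable fun q : (ℝ × ℝ) × E => κ q.2 (q.1.1 - q.1.2) :=
    hκ.comp (by fun_prop : Measurable fun q : (ℝ × ℝ) × E => (q.2, q.1.1 - q.1.2))
  rw [energyR_eq_lintegral_prod (Measurable.lintegral_prod_left hκ),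
    lintegral_lintegral_swap hκ_diff.aemeasurable]
  exact lintegral_congr fun ξ => (energyR_eq_lintegral_prod hκ.of_uncurry_left).symm

theorem energyR_lintegral_mul_weight {E : Type*} [MeasurableSpace E] {ρ : Measure E} [SFinite ρ]
    {κ : E → ℝ → ℝ≥0∞} (hκ : Measurable (Function.uncurry κ))
    {w : E → ℝ≥0∞} (hw : Measurable w) :
    energyR (fun x => ∫⁻ ξ, κ ξ x * w ξ ∂ρ) G μ = ∫⁻ ξ, energyR (κ ξ) G μ * w ξ ∂ρ := by
  rw [energyR_lintegral (hκ.mul (hw.comp measurable_fst))]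
  exact lintegral_congr fun ξ => energyR_mul_const hκ.of_uncurry_left (w ξ)

end Energy

section NegativePart

theorem lintegral_ofReal_neg_le_of_integral_nonneg {α : Type*} [MeasurableSpace α] {ν : Measure α}
    {f : α → ℝ} (hf : Integrable f ν) (hf_nonneg : 0 ≤ ∫ x, f x ∂ν) :
    ∫⁻ x, ENNReal.ofReal (-f x) ∂ν ≤ ∫⁻ x, ENNReal.ofReal (f x) ∂ν := by
  rw [integral_eq_lintegral_pos_part_sub_lintegral_neg_part hf, sub_nonneg] at hf_nonneg
  exact (ENNReal.toReal_le_toReal hf.neg.lintegral_lt_top.ne hf.lintegral_lt_top.ne).1 hf_nonneg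

theorem energyR_ofReal_neg_le_of_integral_nonneg {f : ℝ → ℝ} {G : Set ℝ} {μ : Measure ℝ} [SFinite μ]
    (hf : Measurable f)
    (hf_int : Integrable (fun z : ℝ × ℝ => f (z.1 - z.2)) ((μ.restrict G).prod (μ.restrict G)))
    (hf_nonneg : 0 ≤ ∫ z, f (z.1 - z.2) ∂(μ.restrict G).prod (μ.restrict G)) :
    energyR (fun x => ENNReal.ofReal (-f x)) G μ ≤ energyR (fun x => ENNReal.ofReal (f x)) G μ := by
  rw [energyR_eq_lintegral_prod hf.fun_neg.ennreal_ofReal,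
    energyR_eq_lintegral_prod hf.ennreal_ofReal]
  exact lintegral_ofReal_neg_le_of_integral_nonneg hf_int hf_nonneg

end NegativePart

section CosineKernel

variable {α Ω : Type*} [MeasurableSpace α] [MeasurableSpace Ω]
  {ν : Measure α} [IsFiniteMeasure ν] {P : Measure Ω} [IsFiniteMeasure P]

theorem integral_prod_cos_sub {u : α → ℝ} (hu : Measurable u) :
    ∫ z, Real.cos (u z.1 - u z.2) ∂ν.prod ν
      = (∫ t, Real.cos (u t) ∂ν) ^ 2 + (∫ t, Real.sin (u t) ∂ν) ^ 2 := by
  have hcos : Integrable (fun t => Real.cos (u t)) ν :=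
    .of_bound (by fun_prop) 1 (.of_forall fun _ => Real.abs_cos_le_one _)
  have hsin : Integrable (fun t => Real.sin (u t)) ν :=
    .of_bound (by fun_prop) 1 (.of_forall fun _ => Real.abs_sin_le_one _)
  simp only [Real.cos_sub]
  rw [integral_add (hcos.mul_prod hcos) (hsin.mul_prod hsin),
    integral_prod_mul (fun t => Real.cos (u t)) (fun t => Real.cos (u t)),
    integral_prod_mul (fun t => Real.sin (u t)) (fun t => Real.sin (u t)), sq, sq]

variable {U : α → Ω → ℝ} (hU : Measurable (Function.uncurry U))
include hU

theorem integrable_cos_sub :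
    Integrable (fun q : (α × α) × Ω => Real.cos (U q.1.1 q.2 - U q.1.2 q.2))
      ((ν.prod ν).prod P) := by
  have hU₁ : Measurable fun q : (α × α) × Ω => U q.1.1 q.2 :=
    hU.comp (by fun_prop : Measurable fun q : (α × α) × Ω => (q.1.1, q.2))
  have hU₂ : Measurable fun q : (α × α) × Ω => U q.1.2 q.2 :=
    hU.comp (by fun_prop : Measurable fun q : (α × α) × Ω => (q.1.2, q.2))
  exact .of_bound (hU₁.sub hU₂).cos.aestronglyMeasurable 1
    (.of_forall fun _ => Real.abs_cos_le_one _)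

theorem integral_prod_integral_cos_sub_nonneg :
    0 ≤ ∫ z, ∫ ω, Real.cos (U z.1 ω - U z.2 ω) ∂P ∂ν.prod ν := by
  rw [integral_integral_swap (integrable_cos_sub hU)]
  refine integral_nonneg fun ω => ?_
  dsimp only [Pi.zero_apply]
  rw [integral_prod_cos_sub hU.of_uncurry_right]
  positivity

end CosineKernel

section Chi

variable {d : ℕ} {Ψ : EuclideanSpace ℝ (Fin d) → ℂ} {ξ : EuclideanSpace ℝ (Fin d)}

theorem chi_of_nonneg {x : ℝ} (hx : 0 ≤ x) : chi Ψ ξ x = Complex.exp ((-x : ℝ) * Ψ ξ) := by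
  obtain rfl | hx := hx.eq_or_lt
  · simp [chi]
  · rw [chi, abs_of_pos hx, Real.sign_of_pos hx, one_smul]

theorem chi_neg_right (x : ℝ) : chi Ψ ξ (-x) = chi Ψ (-ξ) x := by
  rw [chi, chi, abs_neg, Real.sign_neg, neg_smul, smul_neg]

theorem measurable_real_sign : Measurable Real.sign :=
  Measurable.ite measurableSet_Iio measurable_const <|
    Measurable.ite measurableSet_Ioi measurable_const measurable_const

theorem measurable_uncurry_chi (hΨ : Measurable Ψ) : Measurable (Function.uncurry (chi Ψ)) := by
  have hsign : Measurable fun p : EuclideanSpace ℝ (Fin d) × ℝ => Real.sign p.2 :=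
    measurable_real_sign.comp measurable_snd
  have hΨsign : Measurable fun p : EuclideanSpace ℝ (Fin d) × ℝ => Ψ (Real.sign p.2 • p.1) :=
    hΨ.comp (hsign.smul measurable_fst)
  exact ((by fun_prop : Measurable fun p : EuclideanSpace ℝ (Fin d) × ℝ =>
    ((-|p.2| : ℝ) : ℂ)).mul hΨsign).cexp

end Chi

/-- `X` has increment exponent `Ψ` under `P`: `E[exp(i⟨ξ, X_t − X_s⟩)] = exp(−(t−s) Ψ(ξ))` for
`0 ≤ s ≤ t`. The index set is `ℝ`, but nothing is asked of `X` at negative times. -/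
def HasIncrementExponent {d : ℕ} {Ω : Type*} [MeasurableSpace Ω] (P : Measure Ω)
    (X : ℝ → Ω → EuclideanSpace ℝ (Fin d)) (Ψ : EuclideanSpace ℝ (Fin d) → ℂ) : Prop :=
  ∀ s t : ℝ, 0 ≤ s → s ≤ t → ∀ ξ : EuclideanSpace ℝ (Fin d),
    ∫ ω, Complex.exp ((⟪ξ, X t ω - X s ω⟫ : ℂ) * Complex.I) ∂P
      = Complex.exp (((-(t - s) : ℝ) : ℂ) * Ψ ξ)

namespace HasIncrementExponent

variable {d : ℕ} {Ψ : EuclideanSpace ℝ (Fin d) → ℂ} {Ω : Type*} [MeasurableSpace Ω]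
  {P : Measure Ω} {X : ℝ → Ω → EuclideanSpace ℝ (Fin d)} (hX : HasIncrementExponent P X Ψ)
include hX

theorem chi_sub {s t : ℝ} (hs : 0 ≤ s) (ht : 0 ≤ t) (ξ : EuclideanSpace ℝ (Fin d)) :
    chi Ψ ξ (t - s) = ∫ ω, Complex.exp ((⟪ξ, X t ω - X s ω⟫ : ℂ) * Complex.I) ∂P := by
  obtain hst | hts := le_total s t
  · rw [chi_of_nonneg (sub_nonneg.2 hst), hX s t hs hst]
  · rw [← neg_sub s t, chi_neg_right, chi_of_nonneg (sub_nonneg.2 hts), ← hX t s ht hts]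
    refine integral_congr_ae (.of_forall fun ω => ?_)
    dsimp only
    rw [← neg_sub (X t ω), inner_neg_neg]

variable [IsFiniteMeasure P] (hX_meas : Measurable (Function.uncurry X))
include hX_meas

theorem re_chi_sub {s t : ℝ} (hs : 0 ≤ s) (ht : 0 ≤ t) (ξ : EuclideanSpace ℝ (Fin d)) :
    (chi Ψ ξ (t - s)).re = ∫ ω, Real.cos (⟪ξ, X t ω⟫ - ⟪ξ, X s ω⟫) ∂P := by
  have hX_time (r : ℝ) : Measurable (X r) := hX_meas.of_uncurry_left
  have hint : Integrable
      (fun ω => Complex.exp ((⟪ξ, X t ω - X s ω⟫ : ℂ) * Complex.I)) P :=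
    .of_bound (by fun_prop) 1 (.of_forall fun ω => (Complex.norm_exp_ofReal_mul_I _).le)
  calc (chi Ψ ξ (t - s)).re
      = ∫ ω, (Complex.exp ((⟪ξ, X t ω - X s ω⟫ : ℂ) * Complex.I)).re ∂P := by
        rw [hX.chi_sub hs ht]; exact (integral_re hint).symm
    _ = ∫ ω, Real.cos (⟪ξ, X t ω⟫ - ⟪ξ, X s ω⟫) ∂P := by
        simp only [Complex.exp_ofReal_mul_I_re, inner_sub_right]

variable {ν : Measure ℝ} (hν : ∀ᵐ t ∂ν, 0 ≤ t)
include hν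

theorem re_chi_sub_ae_eq (ξ : EuclideanSpace ℝ (Fin d)) :
    (fun z : ℝ × ℝ => (chi Ψ ξ (z.1 - z.2)).re) =ᵐ[ν.prod ν]
      fun z => ∫ ω, Real.cos (⟪ξ, X z.1 ω⟫ - ⟪ξ, X z.2 ω⟫) ∂P := by
  filter_upwards [Measure.quasiMeasurePreserving_fst.ae hν,
    Measure.quasiMeasurePreserving_snd.ae hν] with z ht hs
  exact hX.re_chi_sub hX_meas hs ht ξ

variable [IsFiniteMeasure ν]

theorem integrable_re_chi_sub (ξ : EuclideanSpace ℝ (Fin d)) :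
    Integrable (fun z : ℝ × ℝ => (chi Ψ ξ (z.1 - z.2)).re) (ν.prod ν) :=
  have hU : Measurable (Function.uncurry fun t ω => ⟪ξ, X t ω⟫) := measurable_const.inner hX_meas
  (integrable_cos_sub (P := P) hU).integral_prod_left.congr (hX.re_chi_sub_ae_eq hX_meas hν ξ).symm

theorem integral_re_chi_sub_nonneg (ξ : EuclideanSpace ℝ (Fin d)) :
    0 ≤ ∫ z, (chi Ψ ξ (z.1 - z.2)).re ∂ν.prod ν := by
  have hU : Measurable (Function.uncurry fun t ω => ⟪ξ, X t ω⟫) := measurable_const.inner hX_meas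
  exact (integral_prod_integral_cos_sub_nonneg (P := P) hU).trans_eq
    (integral_congr_ae (hX.re_chi_sub_ae_eq hX_meas hν ξ)).symm

end HasIncrementExponent

section SignedKernels

variable {d : ℕ} {Ψ : EuclideanSpace ℝ (Fin d) → ℂ} {G : Set ℝ} {μ : Measure ℝ}

theorem energyR_gplus [SFinite μ] (hΨ : Measurable Ψ) (γ : ℝ) :
    energyR (gplus Ψ γ) G μ
      = ∫⁻ ξ, energyR (fun x => ENNReal.ofReal (chi Ψ ξ x).re) G μ
          * ENNReal.ofReal ‖ξ‖ ^ (-γ) := by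
  unfold gplus
  simp only [ENNReal.ofReal_max, ENNReal.ofReal_zero, max_zero]
  exact energyR_lintegral_mul_weight (measurable_uncurry_chi hΨ).re.ennreal_ofReal (by fun_prop)

theorem energyR_gminus [SFinite μ] (hΨ : Measurable Ψ) (γ : ℝ) :
    energyR (gminus Ψ γ) G μ
      = ∫⁻ ξ, energyR (fun x => ENNReal.ofReal (-(chi Ψ ξ x).re)) G μ
          * ENNReal.ofReal ‖ξ‖ ^ (-γ) := by
  unfold gminus
  simp only [ENNReal.ofReal_max, ENNReal.ofReal_zero, max_zero]
  exact energyR_lintegral_mul_weight (measurable_uncurry_chi hΨ).re.neg.ennreal_ofReal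
    (by fun_prop)

theorem energyR_gminus_le_energyR_gplus [IsFiniteMeasure μ] (hΨ : Measurable Ψ)
    {Ω : Type*} [MeasurableSpace Ω] {P : Measure Ω} [IsFiniteMeasure P]
    {X : ℝ → Ω → EuclideanSpace ℝ (Fin d)}
    (hX : HasIncrementExponent P X Ψ) (hX_meas : Measurable (Function.uncurry X))
    (hG : G ⊆ Set.Ici 0) (γ : ℝ) :
    energyR (gminus Ψ γ) G μ ≤ energyR (gplus Ψ γ) G μ := by
  have hG_nonneg : ∀ᵐ t ∂μ.restrict G, 0 ≤ t :=
    ae_restrict_of_ae_restrict_of_subset hG (ae_restrict_mem measurableSet_Ici)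
  rw [energyR_gminus hΨ, energyR_gplus hΨ]
  gcongr with ξ
  exact energyR_ofReal_neg_le_of_integral_nonneg
    (Complex.measurable_re.comp (measurable_uncurry_chi hΨ).of_uncurry_left)
    (hX.integrable_re_chi_sub hX_meas hG_nonneg ξ)
    (hX.integral_re_chi_sub_nonneg hX_meas hG_nonneg ξ)

end SignedKernels

theorem stmt5_general {d : ℕ} {Ψ : EuclideanSpace ℝ (Fin d) → ℂ} (hΨ : Measurable Ψ)
    {Ω : Type*} [MeasurableSpace Ω] {P : Measure Ω} [IsFiniteMeasure P]
    {X : ℝ → Ω → EuclideanSpace ℝ (Fin d)} (hX : HasIncrementExponent P X Ψ)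
    (hX_meas : Measurable (Function.uncurry X)) {G : Set ℝ} (hG : G ⊆ Set.Ici 0) (γ : ℝ) :
    capacityR (gplus Ψ γ) G ≤ capacityR (gminus Ψ γ) G :=
  capacityR_le_capacityR_of_energyR_le fun _ _ _ =>
    energyR_gminus_le_energyR_gplus hΨ hX hX_meas hG γ

/-- **Theorem 2.1(a).** Let `X` be a process with Lévy-type exponent `Ψ`
(`E[e^{i⟨ξ, X_t − X_s⟩}] = e^{−(t−s)Ψ(ξ)}` for `0 ≤ s ≤ t`), `G ⊆ [0,∞)` Borel and
`β ∈ (0,d)`. If `C_{g_{d−β,+}}(G) > 0` then `C_{g_{d−β,−}}(G) > 0`. -/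
theorem stmt5 {d : ℕ} (hd : 1 ≤ d) (Ψ : EuclideanSpace ℝ (Fin d) → ℂ) (hΨ : Measurable Ψ)
    {Ω : Type*} [MeasurableSpace Ω] (P : Measure Ω) [IsProbabilityMeasure P]
    (X : ℝ → Ω → EuclideanSpace ℝ (Fin d))
    (hXmeas : Measurable fun p : ℝ × Ω => X p.1 p.2)
    (hX : ∀ s t : ℝ, 0 ≤ s → s ≤ t → ∀ ξ : EuclideanSpace ℝ (Fin d),
      ∫ ω, Complex.exp ((⟪ξ, X t ω - X s ω⟫ : ℂ) * Complex.I) ∂P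
        = Complex.exp (((-(t - s) : ℝ) : ℂ) * Ψ ξ))
    (G : Set ℝ) (hG : MeasurableSet G) (hG0 : G ⊆ Set.Ici 0)
    (β : ℝ) (hβ0 : 0 < β) (hβd : β < d)
    (hcap : 0 < capacityR (gplus Ψ ((d : ℝ) - β)) G) :
    0 < capacityR (gminus Ψ ((d : ℝ) - β)) G :=
  hcap.trans_le (stmt5_general hΨ hX hXmeas hG0 _)
end
end

section
/- (Theorem 2.1(d), counterexample) Let d = 1 and Ψ(ξ) = −iξ, the Lévy exponent of the deterministic Lévy process X_t = t. For every β ∈ (0, 1): C_{g_{1−β,+}}([0,1]) = 0, yet C_β(X([0,1])) = C_β([0,1]) > 0, where C_β is the capacity with kernel x ↦ |x|^{−β}. Hence C_{g_{d−β,+}}(G) = 0 does not in general imply that C_β(X(G)) = 0 almost surely. -/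
open MeasureTheory Complex
open scoped ENNReal

noncomputable section

/-- `χ_ξ(x) = exp(−|x| Ψ(sign(x) ξ))` for `Ψ : ℝ → ℂ` (the case `d = 1`). -/
def chi1 (Ψ : ℝ → ℂ) (ξ x : ℝ) : ℂ :=
  Complex.exp (((-|x| : ℝ) : ℂ) * Ψ (Real.sign x * ξ))

/-- `g_{γ,+}(x) = ∫_ℝ (Re χ_ξ(x))_+ |ξ|^{−γ} dξ`, with values in `[0,∞]`. -/
def g1plus (Ψ : ℝ → ℂ) (γ : ℝ) (x : ℝ) : ℝ≥0∞ :=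
  ∫⁻ ξ : ℝ, ENNReal.ofReal (max ((chi1 Ψ ξ x).re) 0) * (ENNReal.ofReal |ξ|) ^ (-γ) ∂volume

/-- `g_{γ,−}(x) = ∫_ℝ (Re χ_ξ(x))_− |ξ|^{−γ} dξ`, with values in `[0,∞]`. -/
def g1minus (Ψ : ℝ → ℂ) (γ : ℝ) (x : ℝ) : ℝ≥0∞ :=
  ∫⁻ ξ : ℝ, ENNReal.ofReal (max (-(chi1 Ψ ξ x).re) 0) * (ENNReal.ofReal |ξ|) ^ (-γ) ∂volume

/-!
For `Ψ(ξ) = -iξ` one has `Re χ_ξ(x) = cos (xξ)`. By Dirichlet's approximation theorem, for every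
`u` one of `cos u, cos 2u, cos 3u, cos 4u` is at least `cos (2π/5) > 0`, so finitely many dilates
of `ξ ↦ max (cos (xξ)) 0` sum to something bounded below by a positive constant. A dilation changes
an integral against `|ξ|^(-γ)` only by a finite factor, and `∫ |ξ|^(-γ) dξ = ∞` for every `γ`;
hence `g_{γ,+}` is identically infinite and all its capacities vanish. In contrast `|x|^(-β)` is
locally integrable for `β < 1`, so Lebesgue measure, restricted to a small piece of a set of
positive measure and normalised, has finite energy.
-/

section PowerWeights

open Module Metric

-- At `x = 0` and `p < 0` the left side is `∞`, while the real power on the right gives `0`.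
theorem enorm_rpow_ae_eq_enorm_norm_rpow {E : Type*} [NormedAddCommGroup E] [MeasurableSpace E]
    (μ : Measure E) [NullSingletonClass μ] (p : ℝ) :
    (fun x : E ↦ ‖x‖ₑ ^ p) =ᵐ[μ] fun x ↦ ‖‖x‖ ^ p‖ₑ := by
  filter_upwards [Measure.ae_ne μ 0] with x hx
  rw [Real.enorm_of_nonneg (by positivity), ← ENNReal.ofReal_rpow_of_pos (norm_pos_iff.2 hx),
    ofReal_norm]

variable {E : Type*} [NormedAddCommGroup E] [NormedSpace ℝ E] [FiniteDimensional ℝ E]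
  [MeasurableSpace E] [BorelSpace E] (μ : Measure E) [μ.IsAddHaarMeasure]

theorem lintegral_comp_smul_mul_enorm_rpow (f : E → ℝ≥0∞) (p : ℝ) {a : ℝ} (ha : a ≠ 0) :
    ∫⁻ x, f (a • x) * ‖x‖ₑ ^ p ∂μ = ‖a‖ₑ ^ (-(p + finrank ℝ E)) * ∫⁻ x, f x * ‖x‖ₑ ^ p ∂μ := by
  have ha₀ : ‖a‖ₑ ≠ 0 := enorm_ne_zero.2 ha
  have weight_eq (x : E) : ‖x‖ₑ ^ p = ‖a‖ₑ ^ (-p) * ‖a • x‖ₑ ^ p := by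
    rw [enorm_smul, ENNReal.mul_rpow_of_ne_top enorm_ne_top enorm_ne_top, ← mul_assoc,
      ← ENNReal.rpow_add _ _ ha₀ enorm_ne_top, neg_add_cancel, ENNReal.rpow_zero, one_mul]
  have jacobian_eq : ENNReal.ofReal |(a ^ finrank ℝ E)⁻¹| = ‖a‖ₑ ^ (-(finrank ℝ E : ℝ)) := by
    rw [← Real.enorm_eq_ofReal_abs, enorm_inv (pow_ne_zero _ ha), enorm_pow, ENNReal.rpow_neg,
      ENNReal.rpow_natCast]
  calc ∫⁻ x, f (a • x) * ‖x‖ₑ ^ p ∂μ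
      = ∫⁻ x, ‖a‖ₑ ^ (-p) * (f (a • x) * ‖a • x‖ₑ ^ p) ∂μ := by
        congr! 2 with x
        rw [weight_eq x, mul_left_comm]
    _ = ‖a‖ₑ ^ (-p) * ∫⁻ x, f x * ‖x‖ₑ ^ p ∂μ.map (a • ·) := by
        rw [lintegral_const_mul' _ _ (ENNReal.rpow_ne_top_of_ne_zero ha₀ enorm_ne_top)]
        congr 1
        exact ((Homeomorph.smulOfNeZero a ha).measurableEmbedding.lintegral_map
          (fun x ↦ f x * ‖x‖ₑ ^ p)).symm
    _ = ‖a‖ₑ ^ (-(p + finrank ℝ E)) * ∫⁻ x, f x * ‖x‖ₑ ^ p ∂μ := by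
        rw [Measure.map_addHaar_smul μ ha, lintegral_smul_measure, jacobian_eq, smul_eq_mul,
          ← mul_assoc, ← ENNReal.rpow_add _ _ ha₀ enorm_ne_top, neg_add]

variable [Nontrivial E]

theorem lintegral_enorm_rpow_eq_top (p : ℝ) : ∫⁻ x, ‖x‖ₑ ^ p ∂μ = ∞ := by
  have not_integrable : ¬ Integrable (fun x : E ↦ ‖x‖ ^ p) μ := by
    rw [integrable_fun_norm_addHaar μ (f := fun y ↦ y ^ p)]
    refine fun h ↦ not_integrableOn_Ioi_rpow ((finrank ℝ E - 1 : ℕ) + p) <|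
      h.congr_fun (fun y (hy : 0 < y) ↦ ?_) measurableSet_Ioi
    simp only [smul_eq_mul, Real.rpow_add hy, Real.rpow_natCast]
  have measurable_rpow : Measurable fun x : E ↦ ‖x‖ ^ p := by fun_prop
  rw [lintegral_congr_ae (enorm_rpow_ae_eq_enorm_norm_rpow μ p)]
  by_contra h
  exact not_integrable ⟨measurable_rpow.aestronglyMeasurable, lt_top_iff_ne_top.2 h⟩

theorem setLIntegral_ball_enorm_rpow_lt_top {p : ℝ} (hp : -(finrank ℝ E : ℝ) < p) (r : ℝ) :
    ∫⁻ x in ball (0 : E) r, ‖x‖ₑ ^ p ∂μ < ∞ := by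
  have measurable_rpow : Measurable fun x : E ↦ ‖x‖ ^ p := by fun_prop
  have integrableOn_rpow : IntegrableOn (fun x : E ↦ ‖x‖ ^ p) (ball 0 r) μ :=
    integrableOn_ball_of_norm_le_rpow finrank_pos (C := 1) (neg_lt.1 hp)
      (.of_forall fun x ↦ by simp [abs_of_nonneg (Real.rpow_nonneg (norm_nonneg x) p)])
      measurable_rpow.aestronglyMeasurable
  rw [lintegral_congr_ae (ae_restrict_of_ae (enorm_rpow_ae_eq_enorm_norm_rpow μ p))]
  exact integrableOn_rpow.2

theorem lintegral_mul_enorm_rpow_eq_top_of_le_sum_comp_smul {ι : Type*} {s : Finset ι}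
    {a : ι → ℝ} (ha : ∀ i ∈ s, a i ≠ 0) {f : E → ℝ≥0∞} (hf : Measurable f) {c : ℝ≥0∞} (hc : c ≠ 0)
    (hcf : ∀ x, c ≤ ∑ i ∈ s, f (a i • x)) (p : ℝ) :
    ∫⁻ x, f x * ‖x‖ₑ ^ p ∂μ = ∞ := by
  by_contra h
  have sum_eq_top : ∑ i ∈ s, ∫⁻ x, f (a i • x) * ‖x‖ₑ ^ p ∂μ = ∞ := by
    refine top_le_iff.1 ?_
    calc ∞ = c * ∫⁻ x, ‖x‖ₑ ^ p ∂μ := by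
          rw [lintegral_enorm_rpow_eq_top, ENNReal.mul_top hc]
      _ = ∫⁻ x, c * ‖x‖ₑ ^ p ∂μ := (lintegral_const_mul _ (by fun_prop)).symm
      _ ≤ ∫⁻ x, ∑ i ∈ s, f (a i • x) * ‖x‖ₑ ^ p ∂μ := by
          simp_rw [← Finset.sum_mul]
          gcongr
          exact hcf _
      _ = ∑ i ∈ s, ∫⁻ x, f (a i • x) * ‖x‖ₑ ^ p ∂μ :=
          lintegral_finsetSum _ fun i _ ↦ by fun_prop
  obtain ⟨i, hi, term_eq_top⟩ := ENNReal.sum_eq_top.1 sum_eq_top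
  rw [lintegral_comp_smul_mul_enorm_rpow μ f p (ha i hi)] at term_eq_top
  exact ENNReal.mul_ne_top
    (ENNReal.rpow_ne_top_of_ne_zero (enorm_ne_zero.2 (ha i hi)) enorm_ne_top) h term_eq_top

end PowerWeights

section Cosine

open scoped Real

theorem exists_nat_cos_two_pi_div_le_cos_mul (u : ℝ) {n : ℕ} (hn : 0 < n) :
    ∃ k ∈ Finset.Icc 1 n, Real.cos (2 * π / (n + 1)) ≤ Real.cos (k * u) := by
  obtain ⟨k, hk, hkn, hround⟩ := Real.exists_nat_abs_mul_sub_round_le (u / (2 * π)) hn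
  refine ⟨k, Finset.mem_Icc.2 ⟨hk, hkn⟩, ?_⟩
  set m : ℤ := round (k * (u / (2 * π)))
  have two_pi_pos := Real.two_pi_pos
  have one_le_n : (1 : ℝ) ≤ n := mod_cast hn
  have dist_le : |k * u - m * (2 * π)| ≤ 2 * π / (n + 1) :=
    calc |k * u - m * (2 * π)|
        = |k * (u / (2 * π)) - m| * (2 * π) := by
          rw [← abs_of_pos two_pi_pos, ← abs_mul, abs_of_pos two_pi_pos]
          congr 1
          field_simp
      _ ≤ 1 / (n + 1) * (2 * π) := by gcongr
      _ = 2 * π / (n + 1) := by ring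
  calc Real.cos (2 * π / (n + 1))
      ≤ Real.cos |k * u - m * (2 * π)| :=
        Real.cos_le_cos_of_nonneg_of_le_pi (abs_nonneg _)
          ((div_le_iff₀ (by positivity)).2 (by nlinarith [Real.pi_pos])) dist_le
    _ = Real.cos (k * u) := by rw [Real.cos_abs, Real.cos_sub_int_mul_two_pi]

theorem ofReal_cos_two_pi_div_le_sum (u : ℝ) {n : ℕ} (hn : 0 < n) :
    ENNReal.ofReal (Real.cos (2 * π / (n + 1)))
      ≤ ∑ k ∈ Finset.Icc 1 n, ENNReal.ofReal (max (Real.cos (k * u)) 0) := by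
  obtain ⟨k, hk, le_cos⟩ := exists_nat_cos_two_pi_div_le_cos_mul u hn
  calc ENNReal.ofReal (Real.cos (2 * π / (n + 1)))
      ≤ ENNReal.ofReal (max (Real.cos (k * u)) 0) :=
        ENNReal.ofReal_le_ofReal (le_max_of_le_left le_cos)
    _ ≤ ∑ k ∈ Finset.Icc 1 n, ENNReal.ofReal (max (Real.cos (k * u)) 0) :=
        Finset.single_le_sum (f := fun k : ℕ ↦ ENNReal.ofReal (max (Real.cos (k * u)) 0))
          (fun _ _ ↦ zero_le) hk

theorem lintegral_cos_posPart_mul_enorm_rpow_eq_top (x p : ℝ) :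
    ∫⁻ ξ : ℝ, ENNReal.ofReal (max (Real.cos (x * ξ)) 0) * ‖ξ‖ₑ ^ p = ∞ := by
  have cos_pos : 0 < Real.cos (2 * π / ((4 : ℕ) + 1)) := by
    apply Real.cos_pos_of_mem_Ioo
    constructor <;> push_cast <;> linarith [Real.pi_pos]
  refine lintegral_mul_enorm_rpow_eq_top_of_le_sum_comp_smul volume (s := Finset.Icc 1 4)
    (a := ((↑) : ℕ → ℝ)) (fun k hk ↦ by have := (Finset.mem_Icc.1 hk).1; positivity)
    (by fun_prop) (ENNReal.ofReal_pos.2 cos_pos).ne' (fun ξ ↦ ?_) p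
  simp_rw [smul_eq_mul, mul_left_comm x]
  exact ofReal_cos_two_pi_div_le_sum (x * ξ) four_pos

theorem re_chi1_neg_mul_I (ξ x : ℝ) :
    (chi1 (fun ξ : ℝ ↦ -(ξ : ℂ) * I) ξ x).re = Real.cos (x * ξ) := by
  have abs_mul_sign : |x| * Real.sign x = x := by
    rcases lt_trichotomy x 0 with hx | rfl | hx
    · rw [abs_of_neg hx, Real.sign_of_neg hx, neg_mul_neg, mul_one]
    · rw [Real.sign_zero, mul_zero]
    · rw [abs_of_pos hx, Real.sign_of_pos hx, mul_one]
  have exponent_eq : ((-|x| : ℝ) : ℂ) * (-((Real.sign x * ξ : ℝ) : ℂ) * I)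
      = ((x * ξ : ℝ) : ℂ) * I := by
    nth_rw 3 [← abs_mul_sign]
    push_cast
    ring
  rw [chi1, exponent_eq, exp_ofReal_mul_I_re]

theorem g1plus_neg_mul_I (γ : ℝ) : g1plus (fun ξ : ℝ ↦ -(ξ : ℂ) * I) γ = fun _ ↦ ∞ := by
  ext x
  simp_rw [g1plus, re_chi1_neg_mul_I, ← Real.enorm_eq_ofReal_abs]
  exact lintegral_cos_posPart_mul_enorm_rpow_eq_top x (-γ)

end Cosine

section Capacity

open Metric Topology

theorem energyR_eq_lintegral (f : ℝ → ℝ≥0∞) {G : Set ℝ} {μ : Measure ℝ} (hG : μ Gᶜ = 0) :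
    energyR f G μ = ∫⁻ t, ∫⁻ s, f (t - s) ∂μ ∂μ := by
  rw [energyR, Measure.restrict_eq_self_of_ae_mem (mem_ae_iff.2 hG)]

theorem capacityR_const_top (G : Set ℝ) : capacityR (fun _ ↦ ∞) G = 0 := by
  simp only [capacityR, ENNReal.inv_eq_zero, iInf_eq_top]
  rintro μ ⟨hμ, hG⟩
  simp [energyR_eq_lintegral _ hG]

theorem capacityR_pos_of_energyR_ne_top {f : ℝ → ℝ≥0∞} {G : Set ℝ} {μ : Measure ℝ}
    [IsProbabilityMeasure μ] (hG : μ Gᶜ = 0) (hμ : energyR f G μ ≠ ∞) : 0 < capacityR f G :=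
  ENNReal.inv_pos.2 (ne_top_of_le_ne_top hμ (iInf₂_le μ ⟨inferInstance, hG⟩))

theorem setLIntegral_sub_le_setLIntegral_ball (f : ℝ → ℝ≥0∞) {H : Set ℝ} {r t : ℝ}
    (hH : H ⊆ ball t r) : ∫⁻ s in H, f (t - s) ≤ ∫⁻ x in ball 0 r, f x := by
  rw [← (Measure.measurePreserving_sub_left volume t).setLIntegral_comp_preimage_emb
    (Homeomorph.subLeft t).measurableEmbedding f]
  refine lintegral_mono_set fun s hs ↦ ?_
  simpa [dist_eq_norm, norm_sub_rev] using hH hs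

theorem capacityR_pos_of_setLIntegral_ball_ne_top {f : ℝ → ℝ≥0∞} {r : ℝ} (hr : 0 < r)
    (hf : ∫⁻ x in ball 0 r, f x ≠ ∞) {G : Set ℝ} (hG : MeasurableSet G) (hG₀ : volume G ≠ 0) :
    0 < capacityR f G := by
  obtain ⟨x, -, volume_pos⟩ := exists_mem_forall_mem_nhdsWithin_pos_measure hG₀
  set H := G ∩ ball x (r / 2)
  have measurableSet_H : MeasurableSet H := hG.inter measurableSet_ball
  have volume_H_ne_zero : volume H ≠ 0 :=
    (volume_pos H (inter_mem_nhdsWithin G (ball_mem_nhds x (half_pos hr)))).ne'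
  have volume_H_ne_top : volume H ≠ ∞ :=
    measure_ne_top_of_subset Set.inter_subset_right measure_ball_lt_top.ne
  have subset_ball {t : ℝ} (ht : t ∈ H) : H ⊆ ball t r := fun s hs ↦
    (dist_triangle_right s t x).trans_lt (by linarith [mem_ball.1 hs.2, mem_ball.1 ht.2])
  set μ := ProbabilityTheory.cond volume H
  have : IsProbabilityMeasure μ :=
    ProbabilityTheory.cond_isProbabilityMeasure_of_finite volume_H_ne_zero volume_H_ne_top
  have measure_compl : μ Gᶜ = 0 := by
    rw [ProbabilityTheory.cond_apply measurableSet_H,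
      (disjoint_compl_right.mono_left Set.inter_subset_left).inter_eq, measure_empty, mul_zero]
  have inner_le : ∀ᵐ t ∂μ, ∫⁻ s, f (t - s) ∂μ ≤ (volume H)⁻¹ * ∫⁻ x in ball 0 r, f x := by
    filter_upwards [ProbabilityTheory.ae_cond_mem measurableSet_H] with t ht
    calc ∫⁻ s, f (t - s) ∂μ = (volume H)⁻¹ * ∫⁻ s in H, f (t - s) := lintegral_smul_measure _ _
      _ ≤ (volume H)⁻¹ * ∫⁻ x in ball 0 r, f x :=
        mul_le_mul_right (setLIntegral_sub_le_setLIntegral_ball f (subset_ball ht)) _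
  refine capacityR_pos_of_energyR_ne_top measure_compl ?_
  rw [energyR_eq_lintegral f measure_compl]
  refine ne_top_of_le_ne_top (ENNReal.mul_ne_top (ENNReal.inv_ne_top.2 volume_H_ne_zero) hf) ?_
  simpa using lintegral_mono_ae inner_le

theorem capacityR_abs_rpow_pos {p : ℝ} (hp : -1 < p) {G : Set ℝ} (hG : MeasurableSet G)
    (hG₀ : volume G ≠ 0) : 0 < capacityR (fun x ↦ ENNReal.ofReal |x| ^ p) G := by
  simp_rw [← Real.enorm_eq_ofReal_abs]
  exact capacityR_pos_of_setLIntegral_ball_ne_top one_pos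
    (setLIntegral_ball_enorm_rpow_lt_top volume (by simpa using hp) 1).ne hG hG₀

end Capacity

theorem stmt16_general {β : ℝ} (hβ : β < 1) {G : Set ℝ} (hG : MeasurableSet G)
    (hG₀ : volume G ≠ 0) :
    capacityR (g1plus (fun ξ : ℝ => -(ξ : ℂ) * Complex.I) (1 - β)) G = 0 ∧
    capacityR (fun x : ℝ => (ENNReal.ofReal |x|) ^ (-β)) ((fun t : ℝ => t) '' G)
      = capacityR (fun x : ℝ => (ENNReal.ofReal |x|) ^ (-β)) G ∧
    0 < capacityR (fun x : ℝ => (ENNReal.ofReal |x|) ^ (-β)) ((fun t : ℝ => t) '' G) := by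
  rw [g1plus_neg_mul_I, Set.image_id']
  exact ⟨capacityR_const_top G, rfl, capacityR_abs_rpow_pos (neg_lt_neg hβ) hG hG₀⟩

/-- **Theorem 2.1(d), counterexample.** For `d = 1` and `Ψ(ξ) = −iξ`, the
Lévy exponent of the deterministic Lévy process `X_t = t`: for every `β ∈ (0,1)`,
`C_{g_{1−β,+}}([0,1]) = 0` yet `C_β(X([0,1])) = C_β([0,1]) > 0`, where `C_β` is the
capacity with kernel `x ↦ |x|^{−β}`. Hence `C_{g_{d−β,+}}(G) = 0` does not imply
`C_β(X(G)) = 0` a.s. in general. -/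
theorem stmt16 (β : ℝ) (hβ0 : 0 < β) (hβ1 : β < 1) :
    capacityR (g1plus (fun ξ : ℝ => -(ξ : ℂ) * Complex.I) (1 - β)) (Set.Icc 0 1) = 0 ∧
    capacityR (fun x : ℝ => (ENNReal.ofReal |x|) ^ (-β)) ((fun t : ℝ => t) '' Set.Icc 0 1)
      = capacityR (fun x : ℝ => (ENNReal.ofReal |x|) ^ (-β)) (Set.Icc 0 1) ∧
    0 < capacityR (fun x : ℝ => (ENNReal.ofReal |x|) ^ (-β)) ((fun t : ℝ => t) '' Set.Icc 0 1) :=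
  stmt16_general hβ1 measurableSet_Icc (by simp)
end
end

section
/- (Example 1, minus part) Let d = 1 and Ψ(ξ) = (1 − cos ξ) − i sin ξ, the Lévy exponent of a rate-1 Poisson process. Then for every x ∈ [0, π/3] and every ξ ∈ ℝ, Re χ_ξ(x) = e^{−x(1−cos ξ)} cos(x sin ξ) ≥ (1/2) e^{−2x} ≥ 0; consequently, for every β ∈ (0,1) and every x ∈ [0, π/3], g_{1−β,−}(x) = 0, and for every μ ∈ P([0, π/3]), ∫_ℝ [∫∫ max(−Re χ_ξ(t−s), 0) μ(dt) μ(ds)] |ξ|^{β−1} dξ = 0. -/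
open MeasureTheory Complex
open scoped ENNReal

noncomputable section

/-!
For a Lévy exponent, `Ψ (-ξ)` is the conjugate of `Ψ ξ`, so the sign of `x` disappears and
`Re χ_ξ(x) = e^{-|x| Re Ψ(ξ)} cos (|x| Im Ψ(ξ))`. The Poisson exponent has `Re Ψ ≤ 2` and
`|Im Ψ| ≤ 1`, so as long as `|x| ≤ r ≤ π / 2` the phase stays in `[-r, r]` and
`Re χ_ξ(x) ≥ cos r · e^{-2|x|} ≥ 0`; the constant `1 / 2` is `cos (π / 3)`. Differences of points of
`[0, r]` have absolute value at most `r`, so the negative part vanishes on all pairs `(t, s)`.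
-/

/-- The Lévy exponent of the rate-1 Poisson process, with the sign convention
`E[exp(iξX_t)] = exp(-t Ψ(ξ))`. -/
def poissonExponent (ξ : ℝ) : ℂ :=
  ((1 - Real.cos ξ : ℝ) : ℂ) - (Real.sin ξ : ℂ) * Complex.I

open scoped ComplexConjugate

theorem re_chi1 (Ψ : ℝ → ℂ) (ξ x : ℝ) :
    (chi1 Ψ ξ x).re = Real.exp (-(|x| * (Ψ (Real.sign x * ξ)).re)) *
      Real.cos (|x| * (Ψ (Real.sign x * ξ)).im) := by
  rw [chi1, Complex.exp_re, Complex.re_ofReal_mul, Complex.im_ofReal_mul, neg_mul, neg_mul,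
    Real.cos_neg]

section LevyExponent

variable {Ψ : ℝ → ℂ} {ξ : ℝ}

theorem re_chi1_of_map_neg_eq_conj (hΨ : Ψ (-ξ) = conj (Ψ ξ)) (x : ℝ) :
    (chi1 Ψ ξ x).re = Real.exp (-(|x| * (Ψ ξ).re)) * Real.cos (|x| * (Ψ ξ).im) := by
  rw [re_chi1]
  rcases lt_trichotomy x 0 with hneg | rfl | hpos
  · rw [Real.sign_of_neg hneg, neg_one_mul, hΨ, Complex.conj_re, Complex.conj_im, mul_neg,
      Real.cos_neg]
  · simp only [abs_zero, zero_mul]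
  · rw [Real.sign_of_pos hpos, one_mul]

theorem cos_mul_exp_le_re_chi1 (hΨ : Ψ (-ξ) = conj (Ψ ξ)) {x a r : ℝ}
    (hre : (Ψ ξ).re ≤ a) (him : |x| * |(Ψ ξ).im| ≤ r) (hr : r ≤ Real.pi / 2) :
    Real.cos r * Real.exp (-(a * |x|)) ≤ (chi1 Ψ ξ x).re := by
  have hr0 : 0 ≤ r := le_trans (by positivity) him
  have hcos_nonneg : 0 ≤ Real.cos r :=
    Real.cos_nonneg_of_neg_pi_div_two_le_of_le (by linarith [Real.pi_pos]) hr
  have hcos : Real.cos r ≤ Real.cos (|x| * (Ψ ξ).im) := by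
    rw [← Real.cos_abs (|x| * (Ψ ξ).im), abs_mul, abs_abs]
    exact Real.cos_le_cos_of_nonneg_of_le_pi (by positivity) (by linarith [Real.pi_pos]) him
  have hexp : Real.exp (-(a * |x|)) ≤ Real.exp (-(|x| * (Ψ ξ).re)) := by
    rw [mul_comm a]
    gcongr
  rw [re_chi1_of_map_neg_eq_conj hΨ, mul_comm]
  gcongr

theorem g1minus_eq_zero {x : ℝ} (h : ∀ ξ, 0 ≤ (chi1 Ψ ξ x).re) (γ : ℝ) :
    g1minus Ψ γ x = 0 := by
  have hneg (ξ : ℝ) : max (-(chi1 Ψ ξ x).re) 0 = 0 := max_eq_right (neg_nonpos.2 (h ξ))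
  simp only [g1minus, hneg, ENNReal.ofReal_zero, zero_mul, lintegral_zero]

end LevyExponent

theorem energyR_eq_zero {f : ℝ → ℝ≥0∞} {G : Set ℝ} (hG : MeasurableSet G)
    (hf : ∀ t ∈ G, ∀ s ∈ G, f (t - s) = 0) (μ : Measure ℝ) : energyR f G μ = 0 :=
  setLIntegral_eq_zero hG fun t ht => setLIntegral_eq_zero hG (hf t ht)

section Poisson

variable {x r : ℝ}

theorem poissonExponent_re (ξ : ℝ) : (poissonExponent ξ).re = 1 - Real.cos ξ := by
  rw [poissonExponent, Complex.sub_re, Complex.ofReal_re, Complex.mul_I_re, Complex.ofReal_im,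
    neg_zero, sub_zero]

theorem poissonExponent_im (ξ : ℝ) : (poissonExponent ξ).im = -Real.sin ξ := by
  rw [poissonExponent, Complex.sub_im, Complex.ofReal_im, Complex.mul_I_im, Complex.ofReal_re,
    zero_sub]

theorem poissonExponent_neg (ξ : ℝ) : poissonExponent (-ξ) = conj (poissonExponent ξ) := by
  apply Complex.ext
  · rw [Complex.conj_re, poissonExponent_re, poissonExponent_re, Real.cos_neg]
  · rw [Complex.conj_im, poissonExponent_im, poissonExponent_im, Real.sin_neg]

theorem re_chi1_poissonExponent (ξ x : ℝ) :
    (chi1 poissonExponent ξ x).re =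
      Real.exp (-(|x| * (1 - Real.cos ξ))) * Real.cos (|x| * Real.sin ξ) := by
  rw [re_chi1_of_map_neg_eq_conj (poissonExponent_neg ξ), poissonExponent_re, poissonExponent_im,
    mul_neg, Real.cos_neg]

theorem cos_mul_exp_le_re_chi1_poissonExponent (hx : |x| ≤ r) (hr : r ≤ Real.pi / 2) (ξ : ℝ) :
    Real.cos r * Real.exp (-(2 * |x|)) ≤ (chi1 poissonExponent ξ x).re := by
  have hre : (poissonExponent ξ).re ≤ 2 := by
    linarith [poissonExponent_re ξ, Real.neg_one_le_cos ξ]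
  have him : |(poissonExponent ξ).im| ≤ 1 := by
    rw [poissonExponent_im, abs_neg]
    exact Real.abs_sin_le_one ξ
  have hphase : |x| * |(poissonExponent ξ).im| ≤ r :=
    (mul_le_of_le_one_right (abs_nonneg x) him).trans hx
  exact cos_mul_exp_le_re_chi1 (poissonExponent_neg ξ) hre hphase hr

theorem re_chi1_poissonExponent_nonneg (hx : |x| ≤ Real.pi / 2) (ξ : ℝ) :
    0 ≤ (chi1 poissonExponent ξ x).re := by
  simpa only [Real.cos_pi_div_two, zero_mul] using
    cos_mul_exp_le_re_chi1_poissonExponent hx le_rfl ξ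

theorem energyR_negPart_re_chi1_poissonExponent_eq_zero {G : Set ℝ} (hG : MeasurableSet G)
    (hdist : ∀ t ∈ G, ∀ s ∈ G, |t - s| ≤ Real.pi / 2) (μ : Measure ℝ) (ξ : ℝ) :
    energyR (fun x => ENNReal.ofReal (max (-(chi1 poissonExponent ξ x).re) 0)) G μ = 0 := by
  refine energyR_eq_zero hG (fun t ht s hs => ?_) μ
  have hre : 0 ≤ (chi1 poissonExponent ξ (t - s)).re :=
    re_chi1_poissonExponent_nonneg (hdist t ht s hs) ξ
  rw [max_eq_right (neg_nonpos.2 hre), ENNReal.ofReal_zero]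

end Poisson

theorem stmt18_general (β : ℝ) {r : ℝ} (hr : r ≤ Real.pi / 2) :
    (∀ x ∈ Set.Icc 0 r, ∀ ξ : ℝ,
      (chi1 poissonExponent ξ x).re
          = Real.exp (-(x * (1 - Real.cos ξ))) * Real.cos (x * Real.sin ξ) ∧
        Real.cos r * Real.exp (-(2 * x)) ≤ (chi1 poissonExponent ξ x).re ∧
        0 ≤ Real.cos r * Real.exp (-(2 * x))) ∧
    (∀ x ∈ Set.Icc 0 r, g1minus poissonExponent (1 - β) x = 0) ∧
    (∀ μ : Measure ℝ,
      ∫⁻ ξ : ℝ,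
        energyR (fun x => ENNReal.ofReal (max (-(chi1 poissonExponent ξ x).re) 0))
            (Set.Icc 0 r) μ
          * (ENNReal.ofReal |ξ|) ^ (β - 1) = 0) := by
  refine ⟨fun x hx ξ => ⟨?_, ?_, ?_⟩, fun x hx => ?_, fun μ => ?_⟩
  · rw [re_chi1_poissonExponent, abs_of_nonneg hx.1]
  · simpa only [abs_of_nonneg hx.1] using
      cos_mul_exp_le_re_chi1_poissonExponent ((abs_of_nonneg hx.1).trans_le hx.2) hr ξ
  · have hcos : 0 ≤ Real.cos r :=
      Real.cos_nonneg_of_neg_pi_div_two_le_of_le (by linarith [Real.pi_pos, hx.1, hx.2]) hr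
    positivity
  · have habs : |x| ≤ Real.pi / 2 := (abs_of_nonneg hx.1).trans_le (hx.2.trans hr)
    exact g1minus_eq_zero (re_chi1_poissonExponent_nonneg habs) (1 - β)
  · have hdist : ∀ t ∈ Set.Icc 0 r, ∀ s ∈ Set.Icc 0 r, |t - s| ≤ Real.pi / 2 := fun t ht s hs => by
      linarith [abs_sub_le_of_le_of_le ht.1 ht.2 hs.1 hs.2]
    simp only [energyR_negPart_re_chi1_poissonExponent_eq_zero measurableSet_Icc hdist, zero_mul,
      lintegral_zero]

/-- **Example 1, minus part.** For `d = 1` and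
`Ψ(ξ) = (1 − cos ξ) − i sin ξ` (the Lévy exponent of a rate-1 Poisson process): for every
`x ∈ [0, π/3]` and `ξ ∈ ℝ`, `Re χ_ξ(x) = e^{−x(1−cos ξ)} cos(x sin ξ) ≥ (1/2)e^{−2x} ≥ 0`;
consequently `g_{1−β,−}(x) = 0` on `[0, π/3]` for every `β ∈ (0,1)`, and for every Borel
probability measure `μ` supported in `[0, π/3]`,
`∫_ℝ [∫∫ (−Re χ_ξ(t−s))_+ μ(dt)μ(ds)] |ξ|^{β−1} dξ = 0`. -/
theorem stmt18 (β : ℝ) (hβ0 : 0 < β) (hβ1 : β < 1) :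
    (∀ x ∈ Set.Icc (0 : ℝ) (Real.pi / 3), ∀ ξ : ℝ,
      (chi1 (fun ζ : ℝ => ((1 - Real.cos ζ : ℝ) : ℂ) - (Real.sin ζ : ℂ) * Complex.I) ξ x).re
          = Real.exp (-(x * (1 - Real.cos ξ))) * Real.cos (x * Real.sin ξ) ∧
        (1 / 2) * Real.exp (-(2 * x))
          ≤ (chi1 (fun ζ : ℝ => ((1 - Real.cos ζ : ℝ) : ℂ)
              - (Real.sin ζ : ℂ) * Complex.I) ξ x).re ∧
        (0 : ℝ) ≤ (1 / 2) * Real.exp (-(2 * x))) ∧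
    (∀ x ∈ Set.Icc (0 : ℝ) (Real.pi / 3),
      g1minus (fun ζ : ℝ => ((1 - Real.cos ζ : ℝ) : ℂ) - (Real.sin ζ : ℂ) * Complex.I)
        (1 - β) x = 0) ∧
    (∀ μ : Measure ℝ, IsProbabilityMeasure μ → μ (Set.Icc (0 : ℝ) (Real.pi / 3))ᶜ = 0 →
      ∫⁻ ξ : ℝ,
        (∫⁻ t in Set.Icc (0 : ℝ) (Real.pi / 3), ∫⁻ s in Set.Icc (0 : ℝ) (Real.pi / 3),
          ENNReal.ofReal (max (-(chi1 (fun ζ : ℝ => ((1 - Real.cos ζ : ℝ) : ℂ)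
            - (Real.sin ζ : ℂ) * Complex.I) ξ (t - s)).re) 0) ∂μ ∂μ)
          * (ENNReal.ofReal |ξ|) ^ (β - 1) ∂volume = 0) := by
  obtain ⟨hre, hg, henergy⟩ := stmt18_general β (r := Real.pi / 3) (by linarith [Real.pi_pos])
  exact ⟨Real.cos_pi_div_three ▸ hre, hg, fun μ _ _ => henergy μ⟩
end
end
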